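/- arXiv:2605.06973 — 2 statements merged into one kernel-verified Lean document; each statement's English description precedes it below -/
import Mathlib

section
/- Superadditivity of quantum relative entropy with tensorized reference: for any density operator ρ^N on ℍ^{⊗N}, any density operator σ on ℍ, and any partition of {1,…,N} into n disjoint blocks B₁,…,B_n each of size k (so N = nk), one has D(ρ^N ‖ σ^{⊗N}) ≥ Σ_{j=1}^{n} D(ρ^{N:(k),B_j} ‖ σ^{⊗k}), where ρ^{N:(k),B_j} is the marginal of ρ^N on the block B_j. -/
open Matrix
open scoped ComplexOrder

/-- Matrix logarithm via the continuous functional calculus. -/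
noncomputable def mlog {m : Type*} [Fintype m] [DecidableEq m] (M : Matrix m m ℂ) :
    Matrix m m ℂ := cfc Real.log M

/-- Umegaki relative entropy with values in `EReal`:
`D(ρ‖σ) = tr(ρ(log ρ − log σ))` when `supp ρ ⊆ supp σ`, and `+∞` otherwise. -/
noncomputable def relEntE {m : Type*} [Fintype m] [DecidableEq m]
    (ρ σ : Matrix m m ℂ) : EReal :=
  open scoped Classical in
  if ∀ v : m → ℂ, σ.mulVec v = 0 → ρ.mulVec v = 0 then
    (((ρ * (mlog ρ - mlog σ)).trace).re : EReal)
  else ⊤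

/-- The tensor power `ϱ^{⊗ι}` over an index type `ι`. -/
noncomputable def tensorPowOn {n : ℕ} (ι : Type*) [Fintype ι]
    (ϱ : Matrix (Fin n) (Fin n) ℂ) : Matrix (ι → Fin n) (ι → Fin n) ℂ :=
  Matrix.of fun x y => ∏ l : ι, ϱ (x l) (y l)

/-- Extension of a configuration on the block `{j} × Fin k` by a configuration `g`
on the complement. -/
def blockExt {n nb k : ℕ} (j : Fin nb) (x : Fin k → Fin n)
    (g : {p : Fin nb × Fin k // p.1 ≠ j} → Fin n) : Fin nb × Fin k → Fin n :=
  fun p => if h : p.1 = j then x p.2 else g ⟨p, h⟩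

/-- The marginal of an `N = nb·k` particle state on the `j`-th block of size `k`
(partial trace over all the other blocks). -/
noncomputable def blockMarginal {n nb k : ℕ}
    (ρ : Matrix (Fin nb × Fin k → Fin n) (Fin nb × Fin k → Fin n) ℂ) (j : Fin nb) :
    Matrix (Fin k → Fin n) (Fin k → Fin n) ℂ :=
  Matrix.of fun x y =>
    ∑ g : {p : Fin nb × Fin k // p.1 ≠ j} → Fin n, ρ (blockExt j x g) (blockExt j y g)

namespace RelEntAux

theorem mlog_conj {m : Type*} [Fintype m] [DecidableEq m] (U M : Matrix m m ℂ) (d : m → ℝ)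
    (hU : Uᴴ * U = 1) (hM : M = U * diagonal (fun i => (d i : ℂ)) * Uᴴ) :
    mlog M = U * diagonal (fun i => ((Real.log (d i) : ℝ) : ℂ)) * Uᴴ := by
  have hU' : U * Uᴴ = 1 := mul_eq_one_comm.mp hU
  have hsa : IsSelfAdjoint M := by
    rw [hM]
    simp only [IsSelfAdjoint, star_eq_conjTranspose, conjTranspose_mul, conjTranspose_conjTranspose,
      diagonal_conjTranspose, Matrix.mul_assoc]
    congr 3
    ext i
    simp
  have haev : ∀ P : Polynomial ℝ, Polynomial.aeval M P
      = U * diagonal (fun i => ((P.eval (d i) : ℝ) : ℂ)) * Uᴴ := by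
    intro P
    induction P using Polynomial.induction_on' with
    | add p q hp hq =>
      simp only [map_add, hp, hq, Polynomial.eval_add, Complex.ofReal_add]
      rw [← diagonal_add, Matrix.mul_add, Matrix.add_mul]
    | monomial k a =>
      have hpow : M ^ k = U * diagonal (fun i => ((d i : ℂ)) ^ k) * Uᴴ := by
        induction k with
        | zero => simp [hU']
        | succ k ih =>
          rw [pow_succ, ih]
          nth_rewrite 1 [hM]
          calc _ = U * diagonal (fun i => ((d i : ℂ)) ^ k) * (Uᴴ * U)
                * diagonal (fun i => (d i : ℂ)) * Uᴴ := by simp only [Matrix.mul_assoc]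
            _ = _ := by
              rw [hU, Matrix.mul_one, Matrix.mul_assoc U, diagonal_mul_diagonal]
              simp only [pow_succ]
      rw [Polynomial.aeval_monomial, hpow, ← Algebra.smul_def, ← Matrix.smul_mul, ← Matrix.mul_smul]
      congr 2
      ext i j
      by_cases h : i = j
      · subst h; simp
      · simp [h]
  let s : Finset ℝ := Finset.univ.image d
  let P : Polynomial ℝ := Lagrange.interpolate s id Real.log
  have hP : ∀ i, P.eval (d i) = Real.log (d i) := fun i =>
    Lagrange.eval_interpolate_at_node (v := id) Real.log (by simp) (by simp [s])
  have hspec : spectrum ℝ M ⊆ (s : Set ℝ) := by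
    intro t ht
    by_contra hts
    apply ht
    have hne : ∀ i, t - d i ≠ 0 := by
      intro i hi
      apply hts
      simp only [s, Finset.coe_image, Finset.coe_univ, Set.image_univ, Set.mem_range]
      exact ⟨i, by linarith⟩
    have he : algebraMap ℝ (Matrix m m ℂ) t - M
        = U * diagonal (fun i => ((t - d i : ℝ) : ℂ)) * Uᴴ := by
      have := haev (Polynomial.C t - Polynomial.X)
      simpa using this
    rw [spectrum.mem_resolventSet_iff, he]
    have hd : IsUnit (diagonal (fun i => ((t - d i : ℝ) : ℂ)) : Matrix m m ℂ) := by
      rw [isUnit_diagonal, Pi.isUnit_iff]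
      intro i
      rw [isUnit_iff_ne_zero]
      exact_mod_cast hne i
    exact ((IsUnit.of_mul_eq_one _ hU').mul hd).mul (IsUnit.of_mul_eq_one _ hU)
  unfold mlog
  have h1 : cfc Real.log M = cfc P.eval M := by
    apply cfc_congr
    intro t ht
    have := hspec ht
    simp only [s, Finset.coe_image, Finset.coe_univ, Set.image_univ, Set.mem_range] at this
    obtain ⟨i, rfl⟩ := this
    exact (hP i).symm
  rw [h1, cfc_polynomial P M hsa, haev]
  simp only [hP]

/-- Diagonal weights of `ρ` in the basis `U`. -/
noncomputable def wt {m : Type*} [Fintype m] (U ρ : Matrix m m ℂ) (x : m) : ℝ :=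
  ((Uᴴ * ρ * U) x x).re

theorem trace_conj_diag {m : Type*} [Fintype m] [DecidableEq m] (U ρ : Matrix m m ℂ)
    (f : m → ℝ) :
    (ρ * (U * diagonal (fun i => (f i : ℂ)) * Uᴴ)).trace.re = ∑ x, wt U ρ x * f x := by
  have : (ρ * (U * diagonal (fun i => (f i : ℂ)) * Uᴴ)).trace
      = ((Uᴴ * ρ * U) * diagonal (fun i => (f i : ℂ))).trace := by
    rw [← Matrix.mul_assoc, trace_mul_comm]
    simp only [Matrix.mul_assoc]
  rw [this, trace]
  simp [wt, mul_diagonal]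

theorem spectral {m : Type*} [Fintype m] [DecidableEq m] (M : Matrix m m ℂ) (hM : M.IsHermitian) :
    ∃ (U : Matrix m m ℂ) (d : m → ℝ), Uᴴ * U = 1 ∧
      M = U * diagonal (fun i => (d i : ℂ)) * Uᴴ ∧ d = hM.eigenvalues := by
  refine ⟨hM.eigenvectorUnitary, hM.eigenvalues, ?_, ?_, rfl⟩
  · have := (Unitary.mem_iff.mp hM.eigenvectorUnitary.2).1
    simpa [star_eq_conjTranspose] using this
  · have := hM.spectral_theorem
    rw [Unitary.conjStarAlgAut_apply] at this
    exact this

theorem wt_self {m : Type*} [Fintype m] [DecidableEq m] (U M : Matrix m m ℂ) (d : m → ℝ)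
    (hU : Uᴴ * U = 1) (hM : M = U * diagonal (fun i => (d i : ℂ)) * Uᴴ) (x : m) :
    wt U M x = d x := by
  have : Uᴴ * M * U = diagonal (fun i => (d i : ℂ)) := by
    rw [hM]
    calc _ = (Uᴴ * U) * diagonal (fun i => (d i : ℂ)) * (Uᴴ * U) := by
          simp only [Matrix.mul_assoc]
      _ = _ := by rw [hU]; simp
  simp [wt, this]

theorem wt_nonneg {m : Type*} [Fintype m] (U M : Matrix m m ℂ)
    (hM : M.PosSemidef) (x : m) : 0 ≤ wt U M x := by
  classical
  have := (hM.conjTranspose_mul_mul_same U).diag_nonneg (i := x)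
  exact (Complex.le_def.mp this).1

theorem klein {m : Type*} [Fintype m] [DecidableEq m] (ρ U : Matrix m m ℂ)
    (hρ : ρ.PosSemidef) (hU : Uᴴ * U = 1) (r : m → ℝ) (hr : ∀ x, 0 ≤ r x)
    (hsum : ∑ x, r x ≤ ρ.trace.re) (hz : ∀ x, r x = 0 → wt U ρ x = 0) :
    ∑ x, wt U ρ x * Real.log (r x) ≤ (ρ * mlog ρ).trace.re := by
  obtain ⟨E, l, hE, hEq, hl⟩ := spectral ρ hρ.1
  have hl0 : ∀ i, 0 ≤ l i := by
    intro i; rw [hl]; exact hρ.eigenvalues_nonneg i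
  have hU' : U * Uᴴ = 1 := mul_eq_one_comm.mp hU
  have hE' : E * Eᴴ = 1 := mul_eq_one_comm.mp hE
  let W := Uᴴ * E
  have hW1 : W * Wᴴ = 1 := by
    simp only [W, conjTranspose_mul, conjTranspose_conjTranspose]
    calc _ = Uᴴ * (E * Eᴴ) * U := by simp only [Matrix.mul_assoc]
      _ = 1 := by rw [hE']; simp [hU]
  have hW2 : Wᴴ * W = 1 := mul_eq_one_comm.mp hW1
  let D : m → m → ℝ := fun x i => Complex.normSq (W x i)
  have hD0 : ∀ x i, 0 ≤ D x i := fun x i => Complex.normSq_nonneg _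
  have hDr : ∀ x, ∑ i, D x i = 1 := by
    intro x
    have := congrFun (congrFun hW1 x) x
    simp only [mul_apply, conjTranspose_apply, one_apply_eq, RCLike.star_def, Complex.mul_conj] at this
    exact_mod_cast this
  have hDc : ∀ i, ∑ x, D x i = 1 := by
    intro i
    have := congrFun (congrFun hW2 i) i
    simp only [mul_apply, conjTranspose_apply, one_apply_eq, RCLike.star_def,
      mul_comm _ (W _ _), Complex.mul_conj] at this
    exact_mod_cast this
  have hwt : ∀ x, wt U ρ x = ∑ i, D x i * l i := by
    intro x
    have h1 : Uᴴ * ρ * U = W * diagonal (fun i => (l i : ℂ)) * Wᴴ := by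
      simp only [W, conjTranspose_mul, conjTranspose_conjTranspose]
      rw [hEq]; simp only [Matrix.mul_assoc]
    have h2 : (Uᴴ * ρ * U) x x = ((∑ i, D x i * l i : ℝ) : ℂ) := by
      rw [h1, mul_apply]
      push_cast
      refine Finset.sum_congr rfl fun i _ => ?_
      rw [mul_diagonal, conjTranspose_apply, RCLike.star_def, mul_right_comm, Complex.mul_conj]
    rw [wt, h2, Complex.ofReal_re]
  have hent : (ρ * mlog ρ).trace.re = ∑ i, l i * Real.log (l i) := by
    rw [mlog_conj E ρ l hE hEq, trace_conj_diag]
    simp only [wt_self E ρ l hE hEq]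
  have htr : ρ.trace.re = ∑ i, l i := by
    have h := trace_conj_diag E ρ (fun _ => 1)
    simpa [hE', wt_self E ρ l hE hEq] using h
  have hterm : ∀ x i, D x i * (l i - r x) ≤
      D x i * (l i * Real.log (l i)) - D x i * l i * Real.log (r x) := by
    intro x i
    rcases (hr x).eq_or_lt with h0 | hpos
    · have hw := hz x h0.symm
      rw [hwt] at hw
      have := (Finset.sum_eq_zero_iff_of_nonneg
        (fun i _ => mul_nonneg (hD0 x i) (hl0 i))).mp hw i (Finset.mem_univ _)
      rw [← h0, this, sub_zero, this, ← mul_assoc, this]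
      simp
    · rcases (hl0 i).eq_or_lt with h0 | hlpos
      · rw [← h0]; simp
        exact mul_nonneg (hD0 x i) hpos.le
      · have h1 := Real.log_le_sub_one_of_pos (div_pos hpos hlpos)
        rw [Real.log_div hpos.ne' hlpos.ne'] at h1
        have h2 : l i * (Real.log (r x) - Real.log (l i)) ≤ r x - l i := by
          calc _ ≤ l i * (r x / l i - 1) := by gcongr
            _ = _ := by field_simp
        have := mul_le_mul_of_nonneg_left h2 (hD0 x i)
        linarith
  have hS := Finset.sum_le_sum (s := Finset.univ) fun x _ =>
    Finset.sum_le_sum (s := Finset.univ) fun i _ => hterm x i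
  have e1 : ∑ x, ∑ i, D x i * (l i - r x) = ∑ i, l i - ∑ x, r x := by
    simp only [mul_sub, Finset.sum_sub_distrib]
    congr 1
    · rw [Finset.sum_comm]
      simp only [← Finset.sum_mul, hDc, one_mul]
    · simp only [← Finset.sum_mul, hDr, one_mul]
  have e2 : ∑ x, ∑ i, (D x i * (l i * Real.log (l i)) - D x i * l i * Real.log (r x))
      = ∑ i, l i * Real.log (l i) - ∑ x, wt U ρ x * Real.log (r x) := by
    simp only [Finset.sum_sub_distrib]
    congr 1
    · rw [Finset.sum_comm]
      simp only [← Finset.sum_mul, hDc, one_mul]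
    · simp only [hwt, Finset.sum_mul]
  rw [e1, e2] at hS
  rw [hent]
  linarith

section blocks
variable {n nb k : ℕ}

/-- The `j`-th block of a configuration. -/
def blk (x : Fin nb × Fin k → Fin n) (j : Fin nb) : Fin k → Fin n := fun i => x (j, i)

/-- Tensor product of block matrices. -/
noncomputable def bigT (A : Fin nb → Matrix (Fin k → Fin n) (Fin k → Fin n) ℂ) :
    Matrix (Fin nb × Fin k → Fin n) (Fin nb × Fin k → Fin n) ℂ :=
  Matrix.of fun x y => ∏ j, A j (blk x j) (blk y j)

theorem sum_blk {R : Type*} [CommSemiring R] (F : Fin nb → (Fin k → Fin n) → R) :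
    ∑ x : Fin nb × Fin k → Fin n, ∏ j, F j (blk x j) = ∏ j, ∑ y, F j y := by
  rw [Fintype.prod_sum]
  exact Fintype.sum_equiv (Equiv.curry _ _ _) _ _ (fun x => rfl)

theorem bigT_mul (A B : Fin nb → Matrix (Fin k → Fin n) (Fin k → Fin n) ℂ) :
    bigT A * bigT B = bigT (fun j => A j * B j) := by
  ext x y
  simp only [bigT, mul_apply, of_apply, ← Finset.prod_mul_distrib]
  exact sum_blk (fun j z => A j (blk x j) z * B j z (blk y j))

theorem bigT_conjTranspose (A : Fin nb → Matrix (Fin k → Fin n) (Fin k → Fin n) ℂ) :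
    (bigT A)ᴴ = bigT (fun j => (A j)ᴴ) := by
  ext x y
  simp [bigT, conjTranspose_apply]

theorem bigT_diagonal (d : Fin nb → (Fin k → Fin n) → ℂ) :
    bigT (fun j => diagonal (d j)) = diagonal (fun x => ∏ j, d j (blk x j)) := by
  ext x y
  by_cases h : x = y
  · subst h; simp [bigT]
  · rw [diagonal_apply_ne _ h]
    have : ∃ j, blk x j ≠ blk y j := by
      by_contra! hc
      exact h (funext fun p => congrFun (hc p.1) p.2)
    obtain ⟨j, hj⟩ := this
    exact Finset.prod_eq_zero (Finset.mem_univ j) (diagonal_apply_ne _ hj)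

theorem bigT_one : bigT (fun _ : Fin nb => (1 : Matrix (Fin k → Fin n) (Fin k → Fin n) ℂ)) = 1 := by
  simp only [← diagonal_one]
  rw [bigT_diagonal]
  simp

/-- Splitting a configuration into a block and the complement. -/
def extEquiv (j : Fin nb) : (Fin k → Fin n) × ({p : Fin nb × Fin k // p.1 ≠ j} → Fin n) ≃
    (Fin nb × Fin k → Fin n) where
  toFun q := blockExt j q.1 q.2
  invFun x := (blk x j, fun p => x p.1)
  left_inv q := by
    ext p
    · simp [blk, blockExt]
    · have := p.2
      simp [blockExt, this]
  right_inv x := by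
    ext p
    by_cases h : p.1 = j
    · subst h; simp [blk, blockExt]
    · simp [blockExt, h]

theorem sum_ext {R : Type*} [AddCommMonoid R] (j : Fin nb) (F : (Fin nb × Fin k → Fin n) → R) :
    ∑ x, F x = ∑ y : Fin k → Fin n, ∑ g, F (blockExt j y g) := by
  rw [← Fintype.sum_prod_type']
  exact (Fintype.sum_equiv (extEquiv j) _ _ (fun x => rfl)).symm

theorem blk_ext_same (j : Fin nb) (y : Fin k → Fin n) (g) : blk (blockExt j y g) j = y := by
  ext i; simp [blk, blockExt]

theorem blk_ext_ne (j i : Fin nb) (h : i ≠ j) (y : Fin k → Fin n) (g) :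
    blk (blockExt j y g) i = fun l => g ⟨(i, l), h⟩ := by
  ext l; simp [blk, blockExt, h]

theorem bigT_update (j : Fin nb) (X : Matrix (Fin k → Fin n) (Fin k → Fin n) ℂ) (x y g g') :
    bigT (Function.update (fun _ => 1) j X) (blockExt j x g) (blockExt j y g') =
      if g = g' then X x y else 0 := by
  simp only [bigT, of_apply]
  rw [← Finset.mul_prod_erase _ _ (Finset.mem_univ j), blk_ext_same, blk_ext_same,
    Function.update_self]
  split_ifs with h
  · subst h
    rw [Finset.prod_eq_one, mul_one]
    intro i hi
    have hij := Finset.ne_of_mem_erase hi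
    rw [Function.update_of_ne hij, blk_ext_ne _ _ hij, blk_ext_ne _ _ hij, one_apply_eq]
  · have : ∃ p, g p ≠ g' p := by
      by_contra! hc
      exact h (funext hc)
    obtain ⟨⟨⟨i, l⟩, hp⟩, hne⟩ := this
    rw [Finset.prod_eq_zero (i := i) (by simpa using hp), mul_zero]
    have hij : i ≠ j := hp
    rw [Function.update_of_ne hij, blk_ext_ne _ _ hij, blk_ext_ne _ _ hij, one_apply_ne]
    intro hc
    exact hne (congrFun hc l)

theorem trace_marginal (ρ : Matrix (Fin nb × Fin k → Fin n) (Fin nb × Fin k → Fin n) ℂ)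
    (j : Fin nb) (X : Matrix (Fin k → Fin n) (Fin k → Fin n) ℂ) :
    (ρ * bigT (Function.update (fun _ => 1) j X)).trace = (blockMarginal ρ j * X).trace := by
  simp only [trace, diag_apply, mul_apply, blockMarginal, of_apply]
  rw [sum_ext j]
  refine Finset.sum_congr rfl fun x _ => ?_
  simp only [sum_ext j, bigT_update]
  rw [Finset.sum_comm]
  refine Finset.sum_congr rfl fun y _ => ?_
  simp [Finset.sum_mul]

theorem wt_marginal (ρ : Matrix (Fin nb × Fin k → Fin n) (Fin nb × Fin k → Fin n) ℂ)
    (U : Fin nb → Matrix (Fin k → Fin n) (Fin k → Fin n) ℂ) (hU : ∀ j, U j * (U j)ᴴ = 1)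
    (j : Fin nb) (f : (Fin k → Fin n) → ℝ) :
    ∑ x, wt (bigT U) ρ x * f (blk x j) = ∑ y, wt (U j) (blockMarginal ρ j) y * f y := by
  rw [← trace_conj_diag, ← trace_conj_diag, ← trace_marginal]
  congr 3
  have h1 : (diagonal (fun x : Fin nb × Fin k → Fin n => (f (blk x j) : ℂ)))
      = bigT (fun i => diagonal (fun y => if i = j then (f y : ℂ) else 1)) := by
    rw [bigT_diagonal]
    congr 1
    ext x
    simp
  rw [h1, bigT_conjTranspose, bigT_mul, bigT_mul]
  congr 1
  ext1 i
  by_cases h : i = j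
  · subst h; simp
  · simp [h, hU]

theorem tensor_eq (σ : Matrix (Fin n) (Fin n) ℂ) :
    tensorPowOn (Fin nb × Fin k) σ = bigT (fun _ => tensorPowOn (Fin k) σ) := by
  ext x y
  simp only [tensorPowOn, bigT, of_apply, blk]
  rw [Fintype.prod_prod_type]

theorem marginal_herm (ρ : Matrix (Fin nb × Fin k → Fin n) (Fin nb × Fin k → Fin n) ℂ)
    (h : ρ.IsHermitian) (j : Fin nb) : (blockMarginal ρ j).IsHermitian := by
  ext x y
  simp only [blockMarginal, conjTranspose_apply, of_apply, star_sum]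
  exact Finset.sum_congr rfl fun g _ => h.apply _ _

theorem tensor_herm (σ : Matrix (Fin n) (Fin n) ℂ) (h : σ.IsHermitian) :
    (tensorPowOn (Fin k) σ).IsHermitian := by
  ext x y
  simp only [tensorPowOn, conjTranspose_apply, of_apply, star_prod]
  exact Finset.prod_congr rfl fun g _ => h.apply _ _

theorem supp_marginal (ρ : Matrix (Fin nb × Fin k → Fin n) (Fin nb × Fin k → Fin n) ℂ)
    (τ : Matrix (Fin k → Fin n) (Fin k → Fin n) ℂ)
    (h : ∀ v, (bigT (fun _ => τ)).mulVec v = 0 → ρ.mulVec v = 0) (j : Fin nb)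
    (v : (Fin k → Fin n) → ℂ) (hv : τ.mulVec v = 0) : (blockMarginal ρ j).mulVec v = 0 := by
  classical
  let w : ({p : Fin nb × Fin k // p.1 ≠ j} → Fin n) → (Fin nb × Fin k → Fin n) → ℂ :=
    fun g z => if (fun p : {p : Fin nb × Fin k // p.1 ≠ j} => z p.1) = g then v (blk z j) else 0
  have hw : ∀ g y g', w g (blockExt j y g') = if g' = g then v y else 0 := by
    intro g y g'
    have : (fun p : {p : Fin nb × Fin k // p.1 ≠ j} => blockExt j y g' p.1) = g' := by
      ext p
      have := p.2
      simp [blockExt, this]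
    simp only [w, this, blk_ext_same]
  have hk : ∀ g, ρ.mulVec (w g) = 0 := by
    intro g
    apply h
    ext a
    simp only [mulVec, dotProduct, Pi.zero_apply]
    rw [sum_ext j]
    simp only [hw, mul_ite, mul_zero, Finset.sum_ite_eq', Finset.mem_univ, if_true]
    have : ∀ y, bigT (fun _ => τ) a (blockExt j y g) * v y
        = (∏ i ∈ Finset.univ.erase j, τ (blk a i) (blk (blockExt j (blk a j) g) i))
          * (τ (blk a j) y * v y) := by
      intro y
      simp only [bigT, of_apply]
      rw [← Finset.mul_prod_erase _ _ (Finset.mem_univ j), blk_ext_same]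
      have : ∏ i ∈ Finset.univ.erase j, τ (blk a i) (blk (blockExt j y g) i)
          = ∏ i ∈ Finset.univ.erase j, τ (blk a i) (blk (blockExt j (blk a j) g) i) := by
        refine Finset.prod_congr rfl fun i hi => ?_
        have hij := Finset.ne_of_mem_erase hi
        rw [blk_ext_ne _ _ hij, blk_ext_ne _ _ hij]
      rw [this]; ring
    simp only [this, ← Finset.mul_sum]
    have h0 := congrFun hv (blk a j)
    simp only [mulVec, dotProduct, Pi.zero_apply] at h0
    rw [h0, mul_zero]
  ext x
  have h2 : ∀ g, ∑ y, ρ (blockExt j x g) (blockExt j y g) * v y = 0 := by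
    intro g
    have := congrFun (hk g) (blockExt j x g)
    simp only [mulVec, dotProduct, Pi.zero_apply] at this
    rw [sum_ext j] at this
    simpa [hw] using this
  simp only [mulVec, dotProduct, blockMarginal, of_apply, Finset.sum_mul, Pi.zero_apply]
  rw [Finset.sum_comm]
  exact Finset.sum_eq_zero fun g _ => h2 g

theorem bigT_unitary (U : Fin nb → Matrix (Fin k → Fin n) (Fin k → Fin n) ℂ)
    (hU : ∀ j, (U j)ᴴ * U j = 1) : (bigT U)ᴴ * bigT U = 1 := by
  rw [bigT_conjTranspose, bigT_mul]
  simp only [hU, bigT_one]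

/-- Additivity of the reference term. -/
theorem ref_term (ρ : Matrix (Fin nb × Fin k → Fin n) (Fin nb × Fin k → Fin n) ℂ)
    (τ : Matrix (Fin k → Fin n) (Fin k → Fin n) ℂ) (hτ : τ.IsHermitian)
    (h : ∀ v, (bigT (fun _ => τ)).mulVec v = 0 → ρ.mulVec v = 0) :
    (ρ * mlog (bigT (fun _ => τ))).trace.re = ∑ j, (blockMarginal ρ j * mlog τ).trace.re := by
  obtain ⟨V, s, hV, hEq, -⟩ := spectral τ hτ
  have hV' : V * Vᴴ = 1 := mul_eq_one_comm.mp hV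
  have hB := bigT_unitary (nb := nb) (fun _ => V) (fun _ => hV)
  have hBig : bigT (fun _ : Fin nb => τ) = bigT (fun _ => V) *
      diagonal (fun x => ((∏ j, s (blk x j) : ℝ) : ℂ)) * (bigT (fun _ => V))ᴴ := by
    push_cast
    rw [← bigT_diagonal (fun _ y => (s y : ℂ)), bigT_conjTranspose, bigT_mul, bigT_mul, ← hEq]
  rw [mlog_conj _ _ _ hB hBig, mlog_conj _ _ _ hV hEq, trace_conj_diag]
  simp only [trace_conj_diag]
  simp only [← wt_marginal ρ (fun _ => V) (fun _ => hV') _ (fun y => Real.log (s y))]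
  rw [Finset.sum_comm]
  refine Finset.sum_congr rfl fun x _ => ?_
  rw [← Finset.mul_sum]
  by_cases hx : ∏ j, s (blk x j) = 0
  · have hw : wt (bigT (fun _ => V)) ρ x = 0 := by
      have h1 := h ((bigT (fun _ => V)).mulVec (Pi.single x 1)) (by
        rw [hBig, mulVec_mulVec, Matrix.mul_assoc, hB, Matrix.mul_one, ← mulVec_mulVec,
          diagonal_mulVec_single, hx]
        simp)
      have h2 : ((bigT (fun _ => V))ᴴ * ρ * bigT (fun _ => V)).mulVec (Pi.single x 1) = 0 := by
        rw [Matrix.mul_assoc, ← mulVec_mulVec, ← mulVec_mulVec, h1, mulVec_zero]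
      have h3 := congrFun h2 x
      rw [mulVec_single_one] at h3
      simp only [col_apply, Pi.zero_apply] at h3
      rw [wt, h3, Complex.zero_re]
    rw [hw, zero_mul, zero_mul]
  · rw [Real.log_prod fun j _ => fun h0 => hx (Finset.prod_eq_zero (Finset.mem_univ j) h0)]

/-- Subadditivity of the von Neumann entropy. -/
theorem subadd (ρ : Matrix (Fin nb × Fin k → Fin n) (Fin nb × Fin k → Fin n) ℂ)
    (hρ : ρ.PosSemidef) (htr : ρ.trace = 1) :
    ∑ j, (blockMarginal ρ j * mlog (blockMarginal ρ j)).trace.re ≤ (ρ * mlog ρ).trace.re := by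
  choose U p hU hEq _ using fun j => spectral (blockMarginal ρ j) (marginal_herm ρ hρ.1 j)
  have hU' : ∀ j, U j * (U j)ᴴ = 1 := fun j => mul_eq_one_comm.mp (hU j)
  have hB := bigT_unitary U hU
  have hB' : bigT U * (bigT U)ᴴ = 1 := mul_eq_one_comm.mp hB
  have hM : ∀ j (f : (Fin k → Fin n) → ℝ),
      ∑ x, wt (bigT U) ρ x * f (blk x j) = ∑ y, p j y * f y := by
    intro j f
    rw [wt_marginal ρ U hU' j f]
    simp only [wt_self _ _ _ (hU j) (hEq j)]
  have hq0 := wt_nonneg (bigT U) ρ hρ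
  have hpe : ∀ j y, p j y = ∑ x, wt (bigT U) ρ x * (if blk x j = y then 1 else 0) := by
    intro j y
    rw [hM j (fun z => if z = y then 1 else 0)]
    simp
  have hp0 : ∀ j y, 0 ≤ p j y := by
    intro j y
    rw [hpe]
    refine Finset.sum_nonneg fun x _ => mul_nonneg (hq0 x) ?_
    split_ifs <;> norm_num
  have hq1 : ∑ x, wt (bigT U) ρ x = 1 := by
    have := trace_conj_diag (bigT U) ρ (fun _ => 1)
    simpa [hB', htr] using this.symm
  have hp1 : ∀ j, ∑ y, p j y = 1 := by
    intro j
    have := hM j (fun _ => 1)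
    simpa [hq1] using this.symm
  have hz : ∀ x, ∏ j, p j (blk x j) = 0 → wt (bigT U) ρ x = 0 := by
    intro x hx
    obtain ⟨j, -, hj⟩ := Finset.prod_eq_zero_iff.mp hx
    rw [hpe] at hj
    have := (Finset.sum_eq_zero_iff_of_nonneg (fun z _ => mul_nonneg (hq0 z)
      (by split_ifs <;> norm_num))).mp hj x (Finset.mem_univ _)
    simpa using this
  have hK := klein ρ (bigT U) hρ hB (fun x => ∏ j, p j (blk x j))
    (fun x => Finset.prod_nonneg fun j _ => hp0 j _)
    (by rw [sum_blk p]; simp [hp1, htr]) hz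
  refine le_trans (le_of_eq ?_) hK
  have : ∀ j, (blockMarginal ρ j * mlog (blockMarginal ρ j)).trace.re
      = ∑ x, wt (bigT U) ρ x * Real.log (p j (blk x j)) := by
    intro j
    rw [mlog_conj _ _ _ (hU j) (hEq j), trace_conj_diag, hM j (fun y => Real.log (p j y))]
    simp only [wt_self _ _ _ (hU j) (hEq j)]
  simp only [this]
  rw [Finset.sum_comm]
  refine Finset.sum_congr rfl fun x _ => ?_
  rw [← Finset.mul_sum]
  by_cases hx : ∏ j, p j (blk x j) = 0
  · rw [hz x hx, zero_mul, zero_mul]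
  · rw [Real.log_prod fun j _ => fun h0 => hx (Finset.prod_eq_zero (Finset.mem_univ j) h0)]

end blocks

end RelEntAux

/-- Superadditivity of the quantum relative entropy with tensorized reference state:
`D(ρ^N ‖ σ^{⊗N}) ≥ ∑_j D(ρ^{N:(k),B_j} ‖ σ^{⊗k})` for a partition of the `N = nb·k`
sites into `nb` blocks of size `k`. -/
theorem relEnt_superadditive {n nb k : ℕ}
    (ρN : Matrix (Fin nb × Fin k → Fin n) (Fin nb × Fin k → Fin n) ℂ)
    (hρ : ρN.PosSemidef) (hρtr : ρN.trace = 1)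
    (σ : Matrix (Fin n) (Fin n) ℂ) (hσ : σ.PosSemidef) (hσtr : σ.trace = 1) :
    ∑ j : Fin nb, relEntE (blockMarginal ρN j) (tensorPowOn (Fin k) σ) ≤
      relEntE ρN (tensorPowOn (Fin nb × Fin k) σ) := by
  open RelEntAux in
  classical
  rw [tensor_eq]
  unfold relEntE
  split_ifs with h
  · have hj : ∀ j, ∀ v, (tensorPowOn (Fin k) σ).mulVec v = 0 →
        (blockMarginal ρN j).mulVec v = 0 :=
      fun j v hv => supp_marginal ρN _ h j v hv
    simp only [if_pos (hj _)]
    have hc : ∀ (s : Finset (Fin nb)) (f : Fin nb → ℝ),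
        ∑ j ∈ s, (f j : EReal) = ((∑ j ∈ s, f j : ℝ) : EReal) := by
      intro s f
      induction s using Finset.induction_on with
      | empty => simp
      | insert a s ha ih => rw [Finset.sum_insert ha, Finset.sum_insert ha, ih, EReal.coe_add]
    rw [hc, EReal.coe_le_coe_iff]
    simp only [Matrix.mul_sub, trace_sub, Complex.sub_re, Finset.sum_sub_distrib]
    rw [ref_term ρN _ (tensor_herm σ hσ.1) h]
    exact sub_le_sub_right (subadd ρN hρ hρtr) _
  · exact le_top
end

section
/- Let ρ^N be an exchangeable density operator on ℍ^{⊗N}, σ a density operator on ℍ, and k ≥ 1 with 2k ≤ N. Then D(ρ^{N:(k)} ‖ σ^{⊗k}) ≤ (N/⌊N/k⌋)·(1/N)·D(ρ^N ‖ σ^{⊗N}) ≤ (2k/N)·D(ρ^N ‖ σ^{⊗N}). -/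
open Matrix
open scoped ComplexOrder

/-- Extension of a configuration on the first `k` sites by a configuration on the rest. -/
def firstExt {n N k : ℕ} (x : Fin k → Fin n) (g : {i : Fin N // ¬ (i : ℕ) < k} → Fin n) :
    Fin N → Fin n :=
  fun i => if h : (i : ℕ) < k then x ⟨i, h⟩ else g ⟨i, h⟩

/-- The `k`-particle marginal of an `N`-particle state (partial trace over the last
`N − k` factors). -/
noncomputable def kMarginal {n N : ℕ} (k : ℕ)
    (ρ : Matrix (Fin N → Fin n) (Fin N → Fin n) ℂ) :
    Matrix (Fin k → Fin n) (Fin k → Fin n) ℂ :=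
  Matrix.of fun x y =>
    ∑ g : {i : Fin N // ¬ (i : ℕ) < k} → Fin n, ρ (firstExt x g) (firstExt y g)

/-- Exchangeability: invariance under permutations of the tensor factors. -/
def Exchangeable {n N : ℕ} (ρ : Matrix (Fin N → Fin n) (Fin N → Fin n) ℂ) : Prop :=
  ∀ π : Equiv.Perm (Fin N), ∀ x y : Fin N → Fin n, ρ (x ∘ π) (y ∘ π) = ρ x y


set_option linter.all false
set_option linter.unusedSectionVars false
set_option linter.unusedSimpArgs false

/-- `M` is diagonalized by the unitary `U` with real eigenvalues `q`. -/
def DiagBy {m : Type*} [Fintype m] [DecidableEq m] (M U : Matrix m m ℂ) (q : m → ℝ) : Prop :=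
  Uᴴ * U = 1 ∧ U * Uᴴ = 1 ∧ M = U * diagonal (fun i => (q i : ℂ)) * Uᴴ

lemma exists_diagBy {m : Type*} [Fintype m] [DecidableEq m] {M : Matrix m m ℂ}
    (hM : M.PosSemidef) : ∃ U q, DiagBy M U q ∧ (∀ i, 0 ≤ q i) ∧
      mlog M = U * diagonal (fun i => (Real.log (q i) : ℂ)) * Uᴴ := by
  refine ⟨hM.1.eigenvectorUnitary, hM.1.eigenvalues, ⟨?_, ?_, ?_⟩, hM.eigenvalues_nonneg, ?_⟩
  · exact Unitary.coe_star_mul_self hM.1.eigenvectorUnitary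
  · exact Unitary.coe_mul_star_self hM.1.eigenvectorUnitary
  · exact hM.1.spectral_theorem
  · rw [mlog, hM.1.cfc_eq]
    rfl

lemma DiagBy.isHermitian {m : Type*} [Fintype m] [DecidableEq m] {M U : Matrix m m ℂ} {q : m → ℝ}
    (h : DiagBy M U q) : M.IsHermitian := by
  rw [h.2.2]
  apply isHermitian_mul_mul_conjTranspose
  apply isHermitian_diagonal_of_self_adjoint
  ext i
  simp

lemma DiagBy.posSemidef {m : Type*} [Fintype m] [DecidableEq m] {M U : Matrix m m ℂ} {q : m → ℝ}
    (h : DiagBy M U q) (hq : ∀ i, 0 ≤ q i) : M.PosSemidef := by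
  rw [h.2.2]
  apply PosSemidef.mul_mul_conjTranspose_same
  apply PosSemidef.diagonal
  intro i
  simpa using hq i

lemma DiagBy.mlog_eq {m : Type*} [Fintype m] [DecidableEq m] {M U : Matrix m m ℂ} {q : m → ℝ}
    (h : DiagBy M U q) (hq : ∀ i, 0 ≤ q i) :
    mlog M = U * diagonal (fun i => (Real.log (q i) : ℂ)) * Uᴴ := by
  obtain ⟨V, p, hV, -, hl⟩ := exists_diagBy (h.posSemidef hq)
  rw [hl]
  obtain ⟨h1, h2, h3⟩ := h
  obtain ⟨g1, g2, g3⟩ := hV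
  have e1 : diagonal (fun i => (p i : ℂ)) * (Vᴴ * U) = (Vᴴ * U) * diagonal (fun i => (q i : ℂ)) := by
    have : Vᴴ * M * U = Vᴴ * M * U := rfl
    nth_rw 1 [g3] at this
    rw [h3] at this
    calc _ = (Vᴴ * V) * diagonal (fun i => (p i : ℂ)) * (Vᴴ * U) := by rw [g1, one_mul]
      _ = Vᴴ * (V * diagonal (fun i => (p i : ℂ)) * Vᴴ) * U := by simp only [Matrix.mul_assoc]
      _ = (Vᴴ * U) * diagonal (fun i => (q i : ℂ)) * (Uᴴ * U) := by
        rw [this]; simp only [Matrix.mul_assoc]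
      _ = _ := by rw [h1, mul_one]
  have e2 : diagonal (fun i => (Real.log (p i) : ℂ)) * (Vᴴ * U)
      = (Vᴴ * U) * diagonal (fun i => (Real.log (q i) : ℂ)) := by
    ext i j
    have := congrFun (congrFun e1 i) j
    rw [diagonal_mul, mul_diagonal] at this ⊢
    by_cases hw : (Vᴴ * U) i j = 0
    · simp [hw]
    · rw [mul_comm] at this
      have := mul_left_cancel₀ hw this
      have : p i = q j := by exact_mod_cast this
      rw [this, mul_comm]
  calc _ = V * (diagonal (fun i => (Real.log (p i) : ℂ)) * (Vᴴ * U)) * Uᴴ := by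
        simp only [Matrix.mul_assoc, h2, mul_one]
    _ = (V * Vᴴ) * U * diagonal (fun i => (Real.log (q i) : ℂ)) * Uᴴ := by
        rw [e2]; simp only [Matrix.mul_assoc]
    _ = _ := by rw [g2, one_mul]

lemma DiagBy.trace_mul_mlog {m : Type*} [Fintype m] [DecidableEq m] {M U : Matrix m m ℂ} {q : m → ℝ}
    (h : DiagBy M U q) (hq : ∀ i, 0 ≤ q i) (ρ : Matrix m m ℂ) :
    (ρ * mlog M).trace.re = ∑ j, ((Uᴴ * ρ * U) j j).re * Real.log (q j) := by
  have : (ρ * mlog M).trace = (Uᴴ * ρ * U * diagonal (fun i => (Real.log (q i) : ℂ))).trace := by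
    rw [h.mlog_eq hq, Matrix.mul_assoc Uᴴ, Matrix.mul_assoc Uᴴ, Matrix.trace_mul_comm Uᴴ]
    simp only [Matrix.mul_assoc]
  rw [this, Matrix.trace, Complex.re_sum]
  refine Finset.sum_congr rfl fun j _ => ?_
  rw [diag_apply, mul_diagonal, Complex.re_mul_ofReal]

lemma DiagBy.trace_eq {m : Type*} [Fintype m] [DecidableEq m] {M U : Matrix m m ℂ} {q : m → ℝ}
    (h : DiagBy M U q) : M.trace = ((∑ i, q i : ℝ) : ℂ) := by
  rw [h.2.2, Matrix.trace_mul_comm, ← Matrix.mul_assoc, h.1, one_mul, trace_diagonal]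
  simp

lemma DiagBy.conj_eq {m : Type*} [Fintype m] [DecidableEq m] {M U : Matrix m m ℂ} {q : m → ℝ}
    (h : DiagBy M U q) : Uᴴ * M * U = diagonal (fun i => (q i : ℂ)) := by
  calc _ = (Uᴴ * U) * diagonal (fun i => (q i : ℂ)) * (Uᴴ * U) := by
        rw [h.2.2]; simp only [Matrix.mul_assoc]
    _ = _ := by rw [h.1, one_mul, mul_one]

/-- kernel condition -/
def SuppLE {m : Type*} [Fintype m] (ρ σ : Matrix m m ℂ) : Prop :=
  ∀ v : m → ℂ, σ.mulVec v = 0 → ρ.mulVec v = 0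

lemma DiagBy.diag_zero_of_supp {m : Type*} [Fintype m] [DecidableEq m] {M U : Matrix m m ℂ}
    {q : m → ℝ} (h : DiagBy M U q) {ρ : Matrix m m ℂ} (hs : SuppLE ρ M) (j : m) (hj : q j = 0) :
    (Uᴴ * ρ * U) j j = 0 := by
  have h0 : M *ᵥ (U *ᵥ Pi.single j 1) = 0 := by
    rw [mulVec_mulVec, h.2.2, Matrix.mul_assoc, h.1, mul_one, ← mulVec_mulVec]
    have : diagonal (fun i => (q i : ℂ)) *ᵥ Pi.single j 1 = 0 := by
      ext i
      simp only [mulVec_single_one, col_apply, diagonal_apply, Pi.zero_apply]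
      split_ifs with hh
      · rw [hh, hj]; simp
      · rfl
    rw [this, mulVec_zero]
  have h1 := hs _ h0
  have h2 : (Uᴴ * ρ * U) *ᵥ Pi.single j 1 = 0 := by
    rw [Matrix.mul_assoc, ← mulVec_mulVec, ← mulVec_mulVec, h1, mulVec_zero]
  have := congrFun h2 j
  simpa using this

/-- Real-valued relative entropy. -/
noncomputable def relEntR {m : Type*} [Fintype m] [DecidableEq m] (ρ σ : Matrix m m ℂ) : ℝ :=
  ((ρ * (mlog ρ - mlog σ)).trace).re

lemma relEntR_eq {m : Type*} [Fintype m] [DecidableEq m] (ρ σ : Matrix m m ℂ) :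
    relEntR ρ σ = (ρ * mlog ρ).trace.re - (ρ * mlog σ).trace.re := by
  rw [relEntR, mul_sub, trace_sub, Complex.sub_re]

/-- Klein's inequality. -/
lemma klein {m : Type*} [Fintype m] [DecidableEq m] {ρ τ V : Matrix m m ℂ} {q : m → ℝ}
    (hρ : ρ.PosSemidef) (hV : DiagBy τ V q) (hq : ∀ i, 0 ≤ q i) (htr : ρ.trace = τ.trace)
    (hs : ∀ j, q j = 0 → (Vᴴ * ρ * V) j j = 0) :
    (ρ * mlog τ).trace.re ≤ (ρ * mlog ρ).trace.re := by
  obtain ⟨U, p, hU, hp, -⟩ := exists_diagBy hρ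
  rw [hV.trace_mul_mlog hq, hU.trace_mul_mlog hp, hU.conj_eq]
  set W := Uᴴ * V with hW
  have hWV : Vᴴ * ρ * V = Wᴴ * diagonal (fun i => (p i : ℂ)) * W := by
    rw [hU.2.2, hW, conjTranspose_mul, conjTranspose_conjTranspose]
    simp only [Matrix.mul_assoc]
  have hW1 : Wᴴ * W = 1 := by
    calc Wᴴ * W = Vᴴ * (U * Uᴴ) * V := by
          rw [hW, conjTranspose_mul, conjTranspose_conjTranspose]; simp only [Matrix.mul_assoc]
      _ = 1 := by rw [hU.2.1, mul_one, hV.1]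
  have hW2 : W * Wᴴ = 1 := by
    calc W * Wᴴ = Uᴴ * (V * Vᴴ) * U := by
          rw [hW, conjTranspose_mul, conjTranspose_conjTranspose]; simp only [Matrix.mul_assoc]
      _ = 1 := by rw [hV.2.1, mul_one, hU.1]
  have hns : ∀ z : ℂ, (star z * z) = (Complex.normSq z : ℂ) := fun z => by
    rw [mul_comm]; exact Complex.mul_conj z
  have col : ∀ j, ∑ i, Complex.normSq (W i j) = 1 := fun j => by
    have := congrFun (congrFun hW1 j) j
    rw [mul_apply] at this
    simp only [conjTranspose_apply, hns, one_apply_eq] at this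
    exact_mod_cast this
  have row : ∀ i, ∑ j, Complex.normSq (W i j) = 1 := fun i => by
    have := congrFun (congrFun hW2 i) i
    rw [mul_apply] at this
    simp only [conjTranspose_apply, mul_comm (W _ _), hns, one_apply_eq] at this
    exact_mod_cast this
  have dj : ∀ j, (Vᴴ * ρ * V) j j = ((∑ i, p i * Complex.normSq (W i j) : ℝ) : ℂ) := fun j => by
    rw [hWV, mul_apply]
    push_cast
    refine Finset.sum_congr rfl fun i _ => ?_
    rw [mul_diagonal, conjTranspose_apply, mul_comm (star _), mul_assoc, hns]
  have hz : ∀ i j, q j = 0 → p i * Complex.normSq (W i j) = 0 := fun i j h => by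
    have h1 := hs j h
    rw [dj] at h1
    have h2 : ∑ i, p i * Complex.normSq (W i j) = 0 := by exact_mod_cast h1
    exact (Finset.sum_eq_zero_iff_of_nonneg
      (fun i _ => mul_nonneg (hp i) (Complex.normSq_nonneg _))).1 h2 i (Finset.mem_univ _)
  have hsum : ∑ i, p i = ∑ i, q i := by
    rw [hU.trace_eq, hV.trace_eq] at htr
    exact_mod_cast htr
  have key : ∀ i j, Complex.normSq (W i j) * (p i - q j) ≤
      Complex.normSq (W i j) * (p i * Real.log (p i)) -
        p i * Complex.normSq (W i j) * Real.log (q j) := fun i j => by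
    have hn := Complex.normSq_nonneg (W i j)
    rcases (hq j).eq_or_lt with h | h
    · have := hz i j h.symm
      rw [← h]
      rw [Real.log_zero]
      rcases mul_eq_zero.1 this with h | h <;> simp [h]
    · rcases (hp i).eq_or_lt with h' | h'
      · rw [← h']
        simp only [zero_sub, mul_neg, zero_mul, mul_zero, sub_zero]
        have := mul_nonneg hn h.le
        linarith
      · have h3 : Real.log (q j / p i) ≤ q j / p i - 1 :=
          Real.log_le_sub_one_of_pos (div_pos h h')
        rw [Real.log_div h.ne' h'.ne'] at h3
        have h4 : p i * (Real.log (q j) - Real.log (p i)) ≤ q j - p i := by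
          calc _ ≤ p i * (q j / p i - 1) := mul_le_mul_of_nonneg_left h3 h'.le
            _ = _ := by field_simp
        nlinarith
  have tot := Finset.sum_le_sum fun i (_ : i ∈ Finset.univ) =>
    Finset.sum_le_sum fun j (_ : j ∈ Finset.univ) => key i j
  have l1 : ∑ i, ∑ j, Complex.normSq (W i j) * (p i - q j) = 0 := by
    simp only [mul_sub, Finset.sum_sub_distrib]
    rw [Finset.sum_comm (f := fun i j => Complex.normSq (W i j) * q j)]
    simp only [← Finset.sum_mul, row, col, one_mul, hsum, sub_self]
  rw [l1] at tot
  simp only [Finset.sum_sub_distrib] at tot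
  rw [Finset.sum_comm (f := fun i j => p i * Complex.normSq (W i j) * Real.log (q j))] at tot
  simp only [← Finset.sum_mul, row, one_mul] at tot
  simp only [dj, Complex.ofReal_re, diagonal_apply_eq]
  linarith

open scoped Kronecker

/-- partial trace over the second factor -/
noncomputable def trR {A B : Type*} [Fintype B] (ρ : Matrix (A × B) (A × B) ℂ) : Matrix A A ℂ :=
  Matrix.of fun a a' => ∑ b, ρ (a, b) (a', b)

/-- partial trace over the first factor -/
noncomputable def trL {A B : Type*} [Fintype A] (ρ : Matrix (A × B) (A × B) ℂ) : Matrix B B ℂ :=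
  Matrix.of fun b b' => ∑ a, ρ (a, b) (a, b')

section bip
variable {A B : Type*} [Fintype A] [DecidableEq A] [Fintype B] [DecidableEq B]

lemma trR_trace (ρ : Matrix (A × B) (A × B) ℂ) : (trR ρ).trace = ρ.trace := by
  simp [trR, Matrix.trace, Fintype.sum_prod_type]

lemma trL_trace (ρ : Matrix (A × B) (A × B) ℂ) : (trL ρ).trace = ρ.trace := by
  simp [trL, Matrix.trace, Fintype.sum_prod_type_right]

lemma trR_posSemidef {ρ : Matrix (A × B) (A × B) ℂ} (h : ρ.PosSemidef) : (trR ρ).PosSemidef := by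
  have : trR ρ = ∑ b, ρ.submatrix (fun a => (a, b)) (fun a => (a, b)) := by
    ext a a'
    simp [trR, Matrix.sum_apply]
  rw [this]
  exact posSemidef_sum _ fun b _ => h.submatrix _

lemma trL_posSemidef {ρ : Matrix (A × B) (A × B) ℂ} (h : ρ.PosSemidef) : (trL ρ).PosSemidef := by
  have : trL ρ = ∑ a, ρ.submatrix (fun b => (a, b)) (fun b => (a, b)) := by
    ext a a'
    simp [trL, Matrix.sum_apply]
  rw [this]
  exact posSemidef_sum _ fun b _ => h.submatrix _

lemma trR_conj_one (ρ : Matrix (A × B) (A × B) ℂ) (V : Matrix B B ℂ) (hV : V * Vᴴ = 1) :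
    trR (((1 : Matrix A A ℂ) ⊗ₖ V)ᴴ * ρ * (1 ⊗ₖ V)) = trR ρ := by
  ext a a'
  have e : ∀ b, (((1 : Matrix A A ℂ) ⊗ₖ V)ᴴ * ρ * ((1 : Matrix A A ℂ) ⊗ₖ V) : Matrix (A × B) (A × B) ℂ) (a, b) (a', b) =
      (Vᴴ * ρ.submatrix (fun b => (a, b)) (fun b => (a', b)) * V) b b := fun b => by
    simp [mul_apply, Fintype.sum_prod_type, one_apply, Finset.sum_mul, apply_ite, ite_mul]
  simp only [trR, of_apply, e]
  change Matrix.trace _ = _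
  rw [Matrix.mul_assoc, Matrix.trace_mul_comm, Matrix.mul_assoc, hV, mul_one]
  rfl

lemma trL_conj_one (ρ : Matrix (A × B) (A × B) ℂ) (V : Matrix A A ℂ) (hV : V * Vᴴ = 1) :
    trL ((V ⊗ₖ (1 : Matrix B B ℂ))ᴴ * ρ * (V ⊗ₖ 1)) = trL ρ := by
  ext a a'
  have e : ∀ b, ((V ⊗ₖ (1 : Matrix B B ℂ))ᴴ * ρ * (V ⊗ₖ (1 : Matrix B B ℂ)) : Matrix (A × B) (A × B) ℂ) (b, a) (b, a') =
      (Vᴴ * ρ.submatrix (fun b => (b, a)) (fun b => (b, a')) * V) b b := fun b => by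
    simp [mul_apply, Fintype.sum_prod_type, one_apply, Finset.sum_mul, apply_ite, ite_mul]
  simp only [trL, of_apply, e]
  change Matrix.trace _ = _
  rw [Matrix.mul_assoc, Matrix.trace_mul_comm, Matrix.mul_assoc, hV, mul_one]
  rfl

lemma trR_conj_left (ρ : Matrix (A × B) (A × B) ℂ) (U : Matrix A A ℂ) :
    trR ((U ⊗ₖ (1 : Matrix B B ℂ))ᴴ * ρ * (U ⊗ₖ 1)) = Uᴴ * trR ρ * U := by
  ext a a'
  simp only [trR, mul_apply, Fintype.sum_prod_type, one_apply, Finset.sum_mul, of_apply,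
    conjTranspose_apply, kroneckerMap_apply, Finset.mul_sum]
  simp [apply_ite, ite_mul, mul_ite]
  rw [Finset.sum_comm]
  refine Finset.sum_congr rfl fun i _ => ?_
  rw [Finset.sum_comm]

lemma trL_conj_right (ρ : Matrix (A × B) (A × B) ℂ) (U : Matrix B B ℂ) :
    trL (((1 : Matrix A A ℂ) ⊗ₖ U)ᴴ * ρ * (1 ⊗ₖ U)) = Uᴴ * trL ρ * U := by
  ext a a'
  simp only [trL, mul_apply, Fintype.sum_prod_type, one_apply, Finset.sum_mul, of_apply,
    conjTranspose_apply, kroneckerMap_apply, Finset.mul_sum]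
  simp [apply_ite, ite_mul, mul_ite]
  rw [Finset.sum_comm]
  refine Finset.sum_congr rfl fun i _ => ?_
  rw [Finset.sum_comm]

lemma trR_conj (ρ : Matrix (A × B) (A × B) ℂ) (U : Matrix A A ℂ) (V : Matrix B B ℂ)
    (hV : V * Vᴴ = 1) : trR ((U ⊗ₖ V)ᴴ * ρ * (U ⊗ₖ V)) = Uᴴ * trR ρ * U := by
  have h : U ⊗ₖ V = (U ⊗ₖ (1 : Matrix B B ℂ)) * ((1 : Matrix A A ℂ) ⊗ₖ V) := by
    rw [← mul_kronecker_mul, mul_one, one_mul]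
  rw [← trR_conj_left, ← trR_conj_one ((U ⊗ₖ (1 : Matrix B B ℂ))ᴴ * ρ * _) V hV, h, conjTranspose_mul]
  simp only [Matrix.mul_assoc]

lemma trL_conj (ρ : Matrix (A × B) (A × B) ℂ) (U : Matrix A A ℂ) (V : Matrix B B ℂ)
    (hU : U * Uᴴ = 1) : trL ((U ⊗ₖ V)ᴴ * ρ * (U ⊗ₖ V)) = Vᴴ * trL ρ * V := by
  have h : U ⊗ₖ V = ((1 : Matrix A A ℂ) ⊗ₖ V) * (U ⊗ₖ (1 : Matrix B B ℂ)) := by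
    rw [← mul_kronecker_mul, mul_one, one_mul]
  rw [← trL_conj_right, ← trL_conj_one (((1 : Matrix A A ℂ) ⊗ₖ V)ᴴ * ρ * _) U hU, h, conjTranspose_mul]
  simp only [Matrix.mul_assoc]

lemma DiagBy.kronecker {M U : Matrix A A ℂ} {q : A → ℝ} {M' U' : Matrix B B ℂ} {q' : B → ℝ}
    (h : DiagBy M U q) (h' : DiagBy M' U' q') :
    DiagBy (M ⊗ₖ M') (U ⊗ₖ U') (fun x => q x.1 * q' x.2) := by
  refine ⟨?_, ?_, ?_⟩
  · rw [conjTranspose_kronecker, ← mul_kronecker_mul, h.1, h'.1, one_kronecker_one]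
  · rw [conjTranspose_kronecker, ← mul_kronecker_mul, h.2.1, h'.2.1, one_kronecker_one]
  · conv_lhs => rw [h.2.2, h'.2.2]
    rw [mul_kronecker_mul, mul_kronecker_mul, conjTranspose_kronecker,
      diagonal_kronecker_diagonal]
    simp

lemma trace_mlog_kronecker {M U : Matrix A A ℂ} {q : A → ℝ} {M' U' : Matrix B B ℂ} {q' : B → ℝ}
    (h : DiagBy M U q) (h' : DiagBy M' U' q') (hq : ∀ i, 0 ≤ q i) (hq' : ∀ i, 0 ≤ q' i)
    (ρ : Matrix (A × B) (A × B) ℂ)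
    (hs : ∀ j, q j.1 * q' j.2 = 0 → ((U ⊗ₖ U')ᴴ * ρ * (U ⊗ₖ U')) j j = 0) :
    (ρ * mlog (M ⊗ₖ M')).trace.re =
      (trR ρ * mlog M).trace.re + (trL ρ * mlog M').trace.re := by
  rw [(h.kronecker h').trace_mul_mlog (fun i => mul_nonneg (hq _) (hq' _)),
    h.trace_mul_mlog hq, h'.trace_mul_mlog hq', ← trR_conj ρ U U' h'.2.1,
    ← trL_conj ρ U U' h.2.1]
  generalize (U ⊗ₖ U')ᴴ * ρ * (U ⊗ₖ U') = R at *
  simp only [trR, trL, of_apply, Complex.re_sum, Finset.sum_mul]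
  rw [Finset.sum_comm (f := fun (x : B) (i : A) => (R (i, x) (i, x)).re * Real.log (q' x)),
    Fintype.sum_prod_type, ← Finset.sum_add_distrib]
  refine Finset.sum_congr rfl fun a _ => ?_
  rw [← Finset.sum_add_distrib]
  refine Finset.sum_congr rfl fun b _ => ?_
  by_cases hz : q a * q' b = 0
  · rw [hs (a, b) hz]; simp
  · rw [Real.log_mul (left_ne_zero_of_mul hz) (right_ne_zero_of_mul hz), mul_add]

lemma SuppLE.trR {σA : Matrix A A ℂ} {σB : Matrix B B ℂ} {ρ : Matrix (A × B) (A × B) ℂ}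
    (h : SuppLE ρ (σA ⊗ₖ σB)) : SuppLE (trR ρ) σA := by
  intro v hv
  have hb : ∀ b, ρ *ᵥ (fun x => v x.1 * (Pi.single b 1 : B → ℂ) x.2) = 0 := fun b => by
    apply h
    ext ⟨a, c⟩
    have := congrFun hv a
    simp only [mulVec, dotProduct, Pi.zero_apply] at this ⊢
    simp only [Fintype.sum_prod_type, kroneckerMap_apply, Pi.single_apply, mul_ite, mul_one,
      mul_zero, Finset.sum_ite_eq', Finset.mem_univ, if_true]
    calc _ = (∑ x, σA a x * v x) * σB c b := by
          rw [Finset.sum_mul]; exact Finset.sum_congr rfl fun _ _ => by ring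
      _ = 0 := by rw [this, zero_mul]
  ext a
  simp only [mulVec, dotProduct, Pi.zero_apply, _root_.trR, of_apply, Finset.sum_mul]
  rw [Finset.sum_comm]
  refine Finset.sum_eq_zero fun b _ => ?_
  have := congrFun (hb b) (a, b)
  simpa [mulVec, dotProduct, Fintype.sum_prod_type, Pi.single_apply] using this

lemma SuppLE.trL {σA : Matrix A A ℂ} {σB : Matrix B B ℂ} {ρ : Matrix (A × B) (A × B) ℂ}
    (h : SuppLE ρ (σA ⊗ₖ σB)) : SuppLE (trL ρ) σB := by
  intro v hv
  have hb : ∀ b, ρ *ᵥ (fun x => (Pi.single b 1 : A → ℂ) x.1 * v x.2) = 0 := fun b => by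
    apply h
    ext ⟨a, c⟩
    have := congrFun hv c
    simp only [mulVec, dotProduct, Pi.zero_apply] at this ⊢
    simp only [Fintype.sum_prod_type_right, kroneckerMap_apply, Pi.single_apply, mul_ite, ite_mul,
      one_mul, zero_mul, mul_zero, Finset.sum_ite_eq', Finset.mem_univ, if_true]
    calc _ = σA a b * (∑ x, σB c x * v x) := by
          rw [Finset.mul_sum]; exact Finset.sum_congr rfl fun _ _ => by ring
      _ = 0 := by rw [this, mul_zero]
  ext a
  simp only [mulVec, dotProduct, Pi.zero_apply, _root_.trL, of_apply, Finset.sum_mul]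
  rw [Finset.sum_comm]
  refine Finset.sum_eq_zero fun b _ => ?_
  have := congrFun (hb b) (b, a)
  simpa [mulVec, dotProduct, Fintype.sum_prod_type_right, Pi.single_apply] using this

/-- superadditivity of the relative entropy with respect to a product state -/
lemma superadd {σA : Matrix A A ℂ} {σB : Matrix B B ℂ} {ρ : Matrix (A × B) (A × B) ℂ}
    (hρ : ρ.PosSemidef) (htr : ρ.trace = 1) (hA : σA.PosSemidef) (hB : σB.PosSemidef)
    (h : SuppLE ρ (σA ⊗ₖ σB)) :
    relEntR (trR ρ) σA + relEntR (trL ρ) σB ≤ relEntR ρ (σA ⊗ₖ σB) := by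
  obtain ⟨U, q, hU, hq, -⟩ := exists_diagBy hA
  obtain ⟨U', q', hU', hq', -⟩ := exists_diagBy hB
  obtain ⟨V, p, hV, hp, -⟩ := exists_diagBy (trR_posSemidef hρ)
  obtain ⟨V', p', hV', hp', -⟩ := exists_diagBy (trL_posSemidef hρ)
  have e1 := trace_mlog_kronecker hU hU' hq hq' ρ
    (fun j hj => (hU.kronecker hU').diag_zero_of_supp h j hj)
  have hs : ∀ j : A × B, p j.1 * p' j.2 = 0 → ((V ⊗ₖ V')ᴴ * ρ * (V ⊗ₖ V')) j j = 0 := by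
    rintro ⟨a, b⟩ hj
    have hR := trR_conj ρ V V' hV'.2.1
    have hL := trL_conj ρ V V' hV.2.1
    rw [hV.conj_eq] at hR
    rw [hV'.conj_eq] at hL
    have hpos : ((V ⊗ₖ V')ᴴ * ρ * (V ⊗ₖ V')).PosSemidef := hρ.conjTranspose_mul_mul_same _
    generalize (V ⊗ₖ V')ᴴ * ρ * (V ⊗ₖ V') = R at *
    rcases mul_eq_zero.1 hj with h0 | h0
    · have := congrFun (congrFun hR a) a
      simp only [trR, of_apply, diagonal_apply_eq] at this h0
      rw [h0, Complex.ofReal_zero] at this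
      exact (Finset.sum_eq_zero_iff_of_nonneg
        (fun i _ => hpos.diag_nonneg)).1 this b (Finset.mem_univ _)
    · have := congrFun (congrFun hL b) b
      simp only [trL, of_apply, diagonal_apply_eq] at this h0
      rw [h0, Complex.ofReal_zero] at this
      exact (Finset.sum_eq_zero_iff_of_nonneg
        (fun i _ => hpos.diag_nonneg)).1 this a (Finset.mem_univ _)
  have e2 := trace_mlog_kronecker hV hV' hp hp' ρ hs
  have k := klein hρ (hV.kronecker hV') (fun i => mul_nonneg (hp _) (hp' _))
    (by rw [trace_kronecker, trR_trace, trL_trace, htr, mul_one]) hs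
  simp only [relEntR_eq]
  linarith

end bip

lemma relEntR_nonneg {m : Type*} [Fintype m] [DecidableEq m] {ρ σ : Matrix m m ℂ}
    (hρ : ρ.PosSemidef) (hσ : σ.PosSemidef) (htr : ρ.trace = σ.trace) (h : SuppLE ρ σ) :
    0 ≤ relEntR ρ σ := by
  obtain ⟨U, q, hU, hq, -⟩ := exists_diagBy hσ
  have := klein hρ hU hq htr (fun j hj => hU.diag_zero_of_supp h j hj)
  rw [relEntR_eq]
  linarith

lemma mlog_submatrix {m l : Type*} [Fintype m] [DecidableEq m] [Fintype l] [DecidableEq l]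
    (e : l ≃ m) {M : Matrix m m ℂ} (hM : M.PosSemidef) :
    mlog (M.submatrix e e) = (mlog M).submatrix e e := by
  obtain ⟨U, q, hU, hq, hl⟩ := exists_diagBy hM
  have hd : ∀ f : m → ℂ, (U * diagonal f * Uᴴ).submatrix e e =
      U.submatrix e e * diagonal (fun i => f (e i)) * (U.submatrix e e)ᴴ := fun f => by
    have hdd : diagonal (fun i => f (e i)) = (diagonal f).submatrix e e :=
      (submatrix_diagonal_equiv f e).symm
    rw [hdd, conjTranspose_submatrix, submatrix_mul_equiv, submatrix_mul_equiv]
  have h : DiagBy (M.submatrix e e) (U.submatrix e e) (fun i => q (e i)) := by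
    refine ⟨?_, ?_, ?_⟩
    · rw [conjTranspose_submatrix, submatrix_mul_equiv, hU.1, submatrix_one_equiv]
    · rw [conjTranspose_submatrix, submatrix_mul_equiv, hU.2.1, submatrix_one_equiv]
    · conv_lhs => rw [hU.2.2]
      rw [hd]
  rw [h.mlog_eq (fun i => hq _), hl, hd]

lemma trace_submatrix_equiv' {m l : Type*} [Fintype m] [Fintype l] (e : l ≃ m)
    (M : Matrix m m ℂ) : (M.submatrix e e).trace = M.trace :=
  Equiv.sum_comp e (fun i => M i i)

lemma relEntR_submatrix {m l : Type*} [Fintype m] [DecidableEq m] [Fintype l] [DecidableEq l]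
    (e : l ≃ m) {ρ σ : Matrix m m ℂ} (hρ : ρ.PosSemidef) (hσ : σ.PosSemidef) :
    relEntR (ρ.submatrix e e) (σ.submatrix e e) = relEntR ρ σ := by
  rw [relEntR, relEntR, mlog_submatrix e hρ, mlog_submatrix e hσ, ← trace_submatrix_equiv' e,
    ← submatrix_mul_equiv _ _ _ e]
  rfl

lemma SuppLE.submatrix {m l : Type*} [Fintype m] [Fintype l]
    (e : l ≃ m) {ρ σ : Matrix m m ℂ} (h : SuppLE ρ σ) :
    SuppLE (ρ.submatrix e e) (σ.submatrix e e) := by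
  intro v hv
  rw [submatrix_mulVec_equiv] at hv ⊢
  have : σ *ᵥ (v ∘ e.symm) = 0 := by
    ext i
    have := congrFun hv (e.symm i)
    simpa using this
  rw [h _ this]
  rfl

lemma tensorPowOn_trace {n : ℕ} (ι : Type*) [Fintype ι] [DecidableEq ι]
    (σ : Matrix (Fin n) (Fin n) ℂ) : (tensorPowOn ι σ).trace = σ.trace ^ Fintype.card ι := by
  have := Finset.prod_univ_sum (fun _ : ι => (Finset.univ : Finset (Fin n))) (fun _ c => σ c c)
  rw [Fintype.piFinset_univ] at this
  simp only [Matrix.trace, diag_apply, tensorPowOn, of_apply]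
  rw [← this, Finset.prod_const, Finset.card_univ]

lemma tensorPowOn_posSemidef {n : ℕ} (ι : Type*) [Fintype ι] [DecidableEq ι]
    {σ : Matrix (Fin n) (Fin n) ℂ} (h : σ.PosSemidef) : (tensorPowOn ι σ).PosSemidef := by
  obtain ⟨U, q, hU, hq, -⟩ := exists_diagBy h
  have e : tensorPowOn ι σ = tensorPowOn ι U *
      diagonal (fun x : ι → Fin n => ∏ l, (q (x l) : ℂ)) * (tensorPowOn ι U)ᴴ := by
    ext x y
    have := Finset.prod_univ_sum (fun _ : ι => (Finset.univ : Finset (Fin n)))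
      (fun l c => U (x l) c * (q c : ℂ) * star (U (y l) c))
    rw [Fintype.piFinset_univ] at this
    conv_lhs => rw [hU.2.2]
    simp only [tensorPowOn, of_apply, mul_apply (N := _ᴴ), mul_diagonal, conjTranspose_apply]
    rw [this]
    refine Finset.sum_congr rfl fun z _ => ?_
    rw [Finset.prod_mul_distrib, Finset.prod_mul_distrib, star_prod]
  rw [e]
  apply PosSemidef.mul_mul_conjTranspose_same
  apply PosSemidef.diagonal
  intro x
  apply Finset.prod_nonneg
  intro l _
  simpa using hq (x l)

lemma tensorPowOn_append {n k M : ℕ} (σ : Matrix (Fin n) (Fin n) ℂ) :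
    (tensorPowOn (Fin (k + M)) σ).submatrix (Fin.appendEquiv k M) (Fin.appendEquiv k M) =
      tensorPowOn (Fin k) σ ⊗ₖ tensorPowOn (Fin M) σ := by
  ext ⟨x, y⟩ ⟨x', y'⟩
  simp [tensorPowOn, Fin.appendEquiv, Fin.prod_univ_add]

/-- the sites beyond the first `k` -/
def tailEquiv (k M : ℕ) : Fin M ≃ {i : Fin (k + M) // ¬ (i : ℕ) < k} where
  toFun j := ⟨Fin.natAdd k j, by simp⟩
  invFun i := ⟨i.1 - k, by have := i.1.2; have := i.2; omega⟩
  left_inv j := by ext; simp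
  right_inv i := by ext; have := i.2; simp; omega

lemma firstExt_eq {n k M : ℕ} (x : Fin k → Fin n) (g : {i : Fin (k + M) // ¬ (i : ℕ) < k} → Fin n) :
    firstExt x g = Fin.append x (g ∘ tailEquiv k M) := by
  ext i
  refine Fin.addCases (fun j => ?_) (fun j => ?_) i
  · simp [firstExt]
  · simp [firstExt, tailEquiv]

lemma kMarginal_eq {n k M : ℕ} (ρ : Matrix (Fin (k + M) → Fin n) (Fin (k + M) → Fin n) ℂ)
    (x y : Fin k → Fin n) :
    kMarginal k ρ x y = ∑ g : Fin M → Fin n, ρ (Fin.append x g) (Fin.append y g) := by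
  simp only [kMarginal, of_apply, firstExt_eq]
  exact Equiv.sum_comp ((tailEquiv k M).symm.arrowCongr (Equiv.refl (Fin n)))
    (fun g => ρ (Fin.append x g) (Fin.append y g))

lemma trR_eq_kMarginal {n k M : ℕ} (ρ : Matrix (Fin (k + M) → Fin n) (Fin (k + M) → Fin n) ℂ) :
    trR (ρ.submatrix (Fin.appendEquiv k M) (Fin.appendEquiv k M)) = kMarginal k ρ := by
  ext x y
  rw [kMarginal_eq]
  rfl

lemma trL_exchangeable {n k M : ℕ} {ρ : Matrix (Fin (k + M) → Fin n) (Fin (k + M) → Fin n) ℂ}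
    (h : Exchangeable ρ) :
    Exchangeable (trL (ρ.submatrix (Fin.appendEquiv k M) (Fin.appendEquiv k M))) := by
  intro π x y
  simp only [trL, of_apply, submatrix_apply]
  refine Finset.sum_congr rfl fun a _ => ?_
  have e : ∀ z : Fin M → Fin n, Fin.appendEquiv k M (a, z ∘ π) = Fin.appendEquiv k M (a, z) ∘
      (finSumFinEquiv.permCongr (Equiv.sumCongr (Equiv.refl (Fin k)) π)) := fun z => by
    ext i
    refine Fin.addCases (fun j => ?_) (fun j => ?_) i
    · simp [Fin.appendEquiv, Equiv.permCongr_apply]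
    · simp [Fin.appendEquiv, Equiv.permCongr_apply]
  rw [e, e, h]

/-- exchange of the first two blocks of length `k` -/
def swapBlocks (k M : ℕ) : Equiv.Perm (Fin (k + (k + M))) :=
  (((Equiv.sumCongr (Equiv.refl (Fin k)) finSumFinEquiv).trans finSumFinEquiv).permCongr
    (((Equiv.sumAssoc (Fin k) (Fin k) (Fin M)).symm.trans
      (Equiv.sumCongr (Equiv.sumComm _ _) (Equiv.refl _))).trans (Equiv.sumAssoc _ _ _)))

lemma append_swapBlocks {n k M : ℕ} (a b : Fin k → Fin n) (g : Fin M → Fin n) :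
    Fin.append a (Fin.append b g) ∘ swapBlocks k M = Fin.append b (Fin.append a g) := by
  ext i
  refine Fin.addCases (fun j => ?_) (fun j => ?_) i
  · simp [swapBlocks, Equiv.permCongr_apply]
  · refine Fin.addCases (fun j => ?_) (fun j => ?_) j
    · simp [swapBlocks, Equiv.permCongr_apply]
    · simp [swapBlocks, Equiv.permCongr_apply]

lemma kMarginal_trL {n k M : ℕ}
    {ρ : Matrix (Fin (k + (k + M)) → Fin n) (Fin (k + (k + M)) → Fin n) ℂ}
    (h : Exchangeable ρ) :
    kMarginal k (trL (ρ.submatrix (Fin.appendEquiv k (k + M)) (Fin.appendEquiv k (k + M)))) =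
      kMarginal k ρ := by
  ext x y
  rw [kMarginal_eq, kMarginal_eq, ← Equiv.sum_comp (Fin.appendEquiv k M), Fintype.sum_prod_type,
    Finset.sum_comm]
  refine Finset.sum_congr rfl fun g _ => ?_
  simp only [trL, of_apply, submatrix_apply]
  refine Finset.sum_congr rfl fun a _ => ?_
  change ρ (Fin.append a (Fin.append x g)) (Fin.append a (Fin.append y g)) =
    ρ (Fin.append x (Fin.append a g)) (Fin.append y (Fin.append a g))
  rw [← h (swapBlocks k M), append_swapBlocks, append_swapBlocks]

lemma block_bound {n k : ℕ} {σ : Matrix (Fin n) (Fin n) ℂ} (hσ : σ.PosSemidef)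
    (hσtr : σ.trace = 1) (m : ℕ) : ∀ (N : ℕ), (m + 1) * k ≤ N →
    ∀ (ρ : Matrix (Fin N → Fin n) (Fin N → Fin n) ℂ), ρ.PosSemidef → ρ.trace = 1 →
    Exchangeable ρ → SuppLE ρ (tensorPowOn (Fin N) σ) →
    SuppLE (kMarginal k ρ) (tensorPowOn (Fin k) σ) ∧
    ((m + 1 : ℕ) : ℝ) * relEntR (kMarginal k ρ) (tensorPowOn (Fin k) σ) ≤
      relEntR ρ (tensorPowOn (Fin N) σ) := by
  induction m with
  | zero =>
    intro N hN ρ hρ htr hex hs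
    obtain ⟨M, rfl⟩ := Nat.exists_eq_add_of_le (show k ≤ N by simpa using hN)
    have hs' := hs.submatrix (Fin.appendEquiv k M)
    rw [tensorPowOn_append] at hs'
    have hp' := hρ.submatrix (Fin.appendEquiv k M)
    have ht' := trace_submatrix_equiv' (Fin.appendEquiv k M) ρ
    have sa := superadd hp' (ht'.trans htr) (tensorPowOn_posSemidef (Fin k) hσ)
      (tensorPowOn_posSemidef (Fin M) hσ) hs'
    rw [← tensorPowOn_append, relEntR_submatrix _ hρ (tensorPowOn_posSemidef _ hσ),
      trR_eq_kMarginal] at sa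
    have hR := hs'.trR
    rw [trR_eq_kMarginal] at hR
    have nn := relEntR_nonneg (trL_posSemidef hp') (tensorPowOn_posSemidef (Fin M) hσ)
      (by rw [trL_trace, ht', htr, tensorPowOn_trace, hσtr, one_pow]) hs'.trL
    refine ⟨hR, ?_⟩
    push_cast
    linarith
  | succ m ih =>
    intro N hN ρ hρ htr hex hs
    have h2 : k + k ≤ N := by nlinarith
    obtain ⟨M, rfl⟩ : ∃ M, N = k + (k + M) := ⟨N - (k + k), by omega⟩
    have hs' := hs.submatrix (Fin.appendEquiv k (k + M))
    rw [tensorPowOn_append] at hs'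
    have hp' := hρ.submatrix (Fin.appendEquiv k (k + M))
    have ht' := trace_submatrix_equiv' (Fin.appendEquiv k (k + M)) ρ
    have sa := superadd hp' (ht'.trans htr) (tensorPowOn_posSemidef (Fin k) hσ)
      (tensorPowOn_posSemidef (Fin (k + M)) hσ) hs'
    rw [← tensorPowOn_append, relEntR_submatrix _ hρ (tensorPowOn_posSemidef _ hσ),
      trR_eq_kMarginal] at sa
    have hR := hs'.trR
    rw [trR_eq_kMarginal] at hR
    have := (ih (k + M) (by nlinarith) _ (trL_posSemidef hp') (by rw [trL_trace, ht', htr])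
      (trL_exchangeable hex) hs'.trL).2
    rw [kMarginal_trL hex] at this
    refine ⟨hR, ?_⟩
    push_cast at this ⊢
    linarith

lemma relEntE_of_supp {m : Type*} [Fintype m] [DecidableEq m] {ρ σ : Matrix m m ℂ}
    (h : SuppLE ρ σ) : relEntE ρ σ = (relEntR ρ σ : EReal) := by
  unfold relEntE
  exact if_pos h

lemma relEntE_of_not_supp {m : Type*} [Fintype m] [DecidableEq m] {ρ σ : Matrix m m ℂ}
    (h : ¬ SuppLE ρ σ) : relEntE ρ σ = ⊤ := by
  unfold relEntE
  exact if_neg h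

/-- Marginal entropy bound for exchangeable states:
`D(ρ^{N:(k)}‖σ^{⊗k}) ≤ (N/⌊N/k⌋)·(1/N)·D(ρ^N‖σ^{⊗N}) ≤ (2k/N)·D(ρ^N‖σ^{⊗N})`. -/
theorem marginal_relEnt_bound {n N k : ℕ} (hk : 1 ≤ k) (hkN : 2 * k ≤ N)
    (ρN : Matrix (Fin N → Fin n) (Fin N → Fin n) ℂ)
    (hρ : ρN.PosSemidef) (hρtr : ρN.trace = 1) (hexch : Exchangeable ρN)
    (σ : Matrix (Fin n) (Fin n) ℂ) (hσ : σ.PosSemidef) (hσtr : σ.trace = 1) :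
    relEntE (kMarginal k ρN) (tensorPowOn (Fin k) σ) ≤
        (((N : ℝ) / ((N / k : ℕ) : ℝ) * (1 / (N : ℝ)) : ℝ) : EReal) *
          relEntE ρN (tensorPowOn (Fin N) σ) ∧
      (((N : ℝ) / ((N / k : ℕ) : ℝ) * (1 / (N : ℝ)) : ℝ) : EReal) *
          relEntE ρN (tensorPowOn (Fin N) σ) ≤
        ((2 * (k : ℝ) / (N : ℝ) : ℝ) : EReal) *
          relEntE ρN (tensorPowOn (Fin N) σ) := by
  have hm : 1 ≤ N / k := (Nat.one_le_div_iff (by omega)).2 (by omega)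
  have hN0 : (0 : ℝ) < N := by exact_mod_cast (show 0 < N by omega)
  have hk0 : (0 : ℝ) < k := by exact_mod_cast hk
  have hm0 : (0 : ℝ) < ((N / k : ℕ) : ℝ) := by exact_mod_cast hm
  have hc : (N : ℝ) / ((N / k : ℕ) : ℝ) * (1 / (N : ℝ)) = 1 / ((N / k : ℕ) : ℝ) := by
    field_simp
  rw [hc]
  have hNk : N ≤ 2 * k * (N / k) := by
    have h1 := Nat.div_add_mod N k
    have h2 := Nat.mod_lt N (show 0 < k by omega)
    nlinarith
  have hle : 1 / ((N / k : ℕ) : ℝ) ≤ 2 * (k : ℝ) / (N : ℝ) := by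
    rw [div_le_div_iff₀ hm0 hN0, one_mul]
    exact_mod_cast hNk
  by_cases hs : SuppLE ρN (tensorPowOn (Fin N) σ)
  · obtain ⟨m, hm'⟩ := Nat.exists_eq_add_of_le' hm
    obtain ⟨h1, h2⟩ := block_bound hσ hσtr m N (by rw [← hm']; exact Nat.div_mul_le_self N k)
      ρN hρ hρtr hexch hs
    have h0 := relEntR_nonneg hρ (tensorPowOn_posSemidef (Fin N) hσ)
      (by rw [hρtr, tensorPowOn_trace, hσtr, one_pow]) hs
    rw [relEntE_of_supp hs, relEntE_of_supp h1, ← EReal.coe_mul, ← EReal.coe_mul,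
      EReal.coe_le_coe_iff, EReal.coe_le_coe_iff]
    refine ⟨?_, mul_le_mul_of_nonneg_right hle h0⟩
    rw [← hm'] at h2
    rw [one_div, inv_mul_eq_div, le_div_iff₀ hm0, mul_comm]
    exact h2
  · rw [relEntE_of_not_supp hs, EReal.coe_mul_top_of_pos (by positivity),
      EReal.coe_mul_top_of_pos (by positivity)]
    exact ⟨le_top, le_rfl⟩
end
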